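/- Assume 1 − (d−1)ν − (2K−1)dμ_B > 0. Let S ⊆ I1 with |S| = k (1 ≤ k < K), let P_S denote the orthogonal projection onto the column span of the blocks {A_l : l ∈ S}, and set v = Σ_{l∈I1∖S} A_l x̃_l. Then max_{l∈S} ‖A_l^T P_S v‖_2 ≥ max_{l∈I1∖S} ‖A_l^T P_S v‖_2. -/

import Mathlib

/- Setting: a measurement matrix `A ∈ ℝ^{m×n}` with `n = L·d`, partitioned into `L` column
blocks of size `m×d`; columns are indexed by pairs `(l, j)` (block `l`, position `j`). -/

noncomputable section

open Finset Matrix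

/-- Euclidean (ℓ₂) norm of a finitely indexed real vector. -/
def e2norm {ι : Type*} [Fintype ι] (v : ι → ℝ) : ℝ := Real.sqrt (∑ i, v i ^ 2)

/-- Euclidean inner (dot) product of two real vectors. -/
def dotp {ι : Type*} [Fintype ι] (u v : ι → ℝ) : ℝ := ∑ i, u i * v i

/-- The `(l, j)` column of the block matrix `A` (block `l`, position `j` inside the block). -/
def acol {m L d : ℕ} (A : Matrix (Fin m) (Fin L × Fin d) ℝ) (l : Fin L) (j : Fin d) :
    Fin m → ℝ :=
  fun i => A i (l, j)

/-- `A_lᵀ v` : correlation of the `l`-th block of `A` with a vector `v ∈ ℝ^m`. -/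
def blkT {m L d : ℕ} (A : Matrix (Fin m) (Fin L × Fin d) ℝ) (l : Fin L) (v : Fin m → ℝ) :
    Fin d → ℝ :=
  fun j => dotp (acol A l j) v

/-- Spectral norm (largest singular value) `ρ(X)` of a real matrix, as the supremum of
`‖Xu‖₂ / ‖u‖₂` over nonzero `u`. -/
def specNorm {p q : ℕ} (X : Matrix (Fin p) (Fin q) ℝ) : ℝ :=
  ⨆ u : {u : Fin q → ℝ // u ≠ 0}, e2norm (X *ᵥ u.1) / e2norm u.1

/-- The `d × d` cross-Gram matrix `A_iᵀ A_j` of two blocks of `A`. -/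
def bgram {m L d : ℕ} (A : Matrix (Fin m) (Fin L × Fin d) ℝ) (i j : Fin L) :
    Matrix (Fin d) (Fin d) ℝ :=
  fun a b => dotp (acol A i a) (acol A j b)

/-- Block-coherence `μ_B = max_{i ≠ j} (1/d) ρ(A_iᵀ A_j)`. -/
def blockCoh {m L d : ℕ} (A : Matrix (Fin m) (Fin L × Fin d) ℝ) : ℝ :=
  ⨆ p : {p : Fin L × Fin L // p.1 ≠ p.2},
    (1 / (d : ℝ)) * specNorm (bgram A p.1.1 p.1.2)

/-- Sub-coherence `ν`: the maximum of `|a_iᵀ a_j|` over pairs of distinct columns lying in the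
same block of `A`. -/
def subCoh {m L d : ℕ} (A : Matrix (Fin m) (Fin L × Fin d) ℝ) : ℝ :=
  ⨆ t : {t : Fin L × Fin d × Fin d // t.2.1 ≠ t.2.2},
    |dotp (acol A t.1.1 t.1.2.1) (acol A t.1.1 t.1.2.2)|

/-
A vector `w = ∑_{j ∈ S} A_j c_j` has correlations `A_lᵀ w = ∑_{j ∈ S} A_lᵀ A_j c_j`. Let `i ∈ S`
maximize `‖c_i‖`, and call this maximum `M`. For `l ∉ S` every summand involves two distinct blocks,
so `‖A_lᵀ w‖ ≤ |S| d μ_B M`. For `l = i` the diagonal summand has norm at least `(1 - (d-1)ν) M`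
while the other `|S| - 1` are again at most `d μ_B M`, so
`‖A_iᵀ w‖ ≥ (1 - (d-1)ν - (|S|-1) d μ_B) M`. The coherence condition compares the two bounds.
-/

section BlockDominance

variable {κ E F : Type*} [SeminormedAddCommGroup E] [SeminormedAddCommGroup F] {β : ℝ}

lemma norm_sum_apply_le_card_mul {T : Finset κ} {g : κ → E → F} {x : κ → E} {M : ℝ} (hβ : 0 ≤ β)
    (hg : ∀ j ∈ T, ∀ y, ‖g j y‖ ≤ β * ‖y‖) (hx : ∀ j ∈ T, ‖x j‖ ≤ M) :
    ‖∑ j ∈ T, g j (x j)‖ ≤ #T * (β * M) := by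
  rw [← nsmul_eq_mul, ← sum_const]
  exact norm_sum_le_of_le T fun j hj =>
    (hg j hj (x j)).trans (mul_le_mul_of_nonneg_left (hx j hj) hβ)

lemma exists_mem_forall_notMem_norm_sum_le {α : ℝ} {G : κ → κ → E → F} {S : Finset κ}
    (hβ : 0 ≤ β) (hdiag : ∀ i y, α * ‖y‖ ≤ ‖G i i y‖)
    (hoff : ∀ i j, i ≠ j → ∀ y, ‖G i j y‖ ≤ β * ‖y‖)
    (hS : S.Nonempty) (hαβ : (2 * (#S : ℝ) - 1) * β ≤ α) (x : κ → E) :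
    ∃ i ∈ S, ∀ l ∉ S, ‖∑ j ∈ S, G l j (x j)‖ ≤ ‖∑ j ∈ S, G i j (x j)‖ := by
  classical
  obtain ⟨i, hi, hmax⟩ := S.exists_max_image (fun j => ‖x j‖) hS
  refine ⟨i, hi, fun l hl => ?_⟩
  have upper : ‖∑ j ∈ S, G l j (x j)‖ ≤ #S * (β * ‖x i‖) :=
    norm_sum_apply_le_card_mul hβ (fun j hj => hoff l j (ne_of_mem_of_not_mem hj hl).symm) hmax
  have rest : ‖∑ j ∈ S.erase i, G i j (x j)‖ ≤ ((#S : ℝ) - 1) * (β * ‖x i‖) := by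
    rw [← cast_card_erase_of_mem hi]
    exact norm_sum_apply_le_card_mul hβ (fun j hj => hoff i j (ne_of_mem_erase hj).symm)
      fun j hj => hmax j (mem_of_mem_erase hj)
  have lower : α * ‖x i‖ ≤ ‖∑ j ∈ S, G i j (x j)‖ + ‖∑ j ∈ S.erase i, G i j (x j)‖ := by
    rw [← add_sum_erase S (fun j => G i j (x j)) hi]
    exact (hdiag i (x i)).trans (norm_le_add_norm_add _ _)
  have margin := mul_le_mul_of_nonneg_right hαβ (norm_nonneg (x i))
  linarith

end BlockDominance

section EuclideanNorm

variable {ι : Type*} [Fintype ι]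

lemma e2norm_eq_norm (v : ι → ℝ) : e2norm v = ‖WithLp.toLp 2 v‖ := by
  simp [e2norm, EuclideanSpace.norm_eq]

lemma e2norm_nonneg (v : ι → ℝ) : 0 ≤ e2norm v := Real.sqrt_nonneg _

lemma e2norm_sq (v : ι → ℝ) : e2norm v ^ 2 = ∑ i, v i ^ 2 :=
  Real.sq_sqrt (sum_nonneg fun i _ => sq_nonneg (v i))

lemma dotp_self (v : ι → ℝ) : dotp v v = e2norm v ^ 2 := by
  rw [e2norm_sq]
  exact sum_congr rfl fun i _ => (sq (v i)).symm

lemma dotp_le_e2norm_mul_e2norm (u v : ι → ℝ) : dotp u v ≤ e2norm u * e2norm v :=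
  Real.sum_mul_le_sqrt_mul_sqrt _ _ _

lemma sq_sum_abs_le_card_mul_e2norm_sq (u : ι → ℝ) :
    (∑ a, |u a|) ^ 2 ≤ Fintype.card ι * e2norm u ^ 2 := by
  simpa only [sq_abs, ← e2norm_sq, card_univ] using
    sq_sum_le_card_mul_sum_sq (s := univ) (f := fun a => |u a|)

end EuclideanNorm

section UnitDiagonal

variable {ι : Type*} [Fintype ι] {G : Matrix ι ι ℝ} {ν : ℝ}

lemma sub_mul_sq_sum_abs_le_dotp_mulVec (hdiag : ∀ a, G a a = 1)
    (hoff : ∀ a b, a ≠ b → |G a b| ≤ ν) (u : ι → ℝ) :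
    (1 + ν) * e2norm u ^ 2 - ν * (∑ a, |u a|) ^ 2 ≤ dotp u (G *ᵥ u) := by
  classical
  have entry (a b : ι) :
      (if a = b then (1 + ν) * u a ^ 2 else 0) - ν * (|u a| * |u b|) ≤ u a * (G a b * u b) := by
    split_ifs with hab
    · subst hab
      rw [hdiag, abs_mul_abs_self]
      linarith
    · calc 0 - ν * (|u a| * |u b|) ≤ -(|G a b| * (|u a| * |u b|)) := by
            rw [zero_sub]; gcongr; exact hoff a b hab
        _ = -|u a * (G a b * u b)| := by simp only [abs_mul, mul_left_comm]
        _ ≤ u a * (G a b * u b) := neg_abs_le _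
  calc (1 + ν) * e2norm u ^ 2 - ν * (∑ a, |u a|) ^ 2
      = ∑ a, ∑ b, ((if a = b then (1 + ν) * u a ^ 2 else 0) - ν * (|u a| * |u b|)) := by
        rw [sq (∑ a, |u a|), sum_mul_sum]
        simp only [sum_sub_distrib, sum_ite_eq, mem_univ, if_true, e2norm_sq, mul_sum]
    _ ≤ ∑ a, ∑ b, u a * (G a b * u b) := sum_le_sum fun a _ => sum_le_sum fun b _ => entry a b
    _ = dotp u (G *ᵥ u) := by simp only [dotp, mulVec, dotProduct, mul_sum]

lemma one_sub_mul_e2norm_le_e2norm_mulVec (hν : 0 ≤ ν) (hdiag : ∀ a, G a a = 1)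
    (hoff : ∀ a b, a ≠ b → |G a b| ≤ ν) (u : ι → ℝ) :
    (1 - ((Fintype.card ι : ℝ) - 1) * ν) * e2norm u ≤ e2norm (G *ᵥ u) := by
  rcases (e2norm_nonneg u).eq_or_lt with hu | hu
  · rw [← hu, mul_zero]
    exact e2norm_nonneg _
  refine le_of_mul_le_mul_left ?_ hu
  calc e2norm u * ((1 - ((Fintype.card ι : ℝ) - 1) * ν) * e2norm u)
      = (1 + ν) * e2norm u ^ 2 - ν * (Fintype.card ι * e2norm u ^ 2) := by ring
    _ ≤ (1 + ν) * e2norm u ^ 2 - ν * (∑ a, |u a|) ^ 2 := by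
        gcongr
        exact sq_sum_abs_le_card_mul_e2norm_sq u
    _ ≤ dotp u (G *ᵥ u) := sub_mul_sq_sum_abs_le_dotp_mulVec hdiag hoff u
    _ ≤ e2norm u * e2norm (G *ᵥ u) := dotp_le_e2norm_mul_e2norm _ _

end UnitDiagonal

section SpectralNorm

variable {p q : ℕ} (X : Matrix (Fin p) (Fin q) ℝ)

lemma specNorm_nonneg : 0 ≤ specNorm X :=
  Real.iSup_nonneg fun _ => div_nonneg (e2norm_nonneg _) (e2norm_nonneg _)

open scoped Matrix.Norms.L2Operator in
lemma bddAbove_range_e2norm_mulVec_div :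
    BddAbove (Set.range fun u : {u : Fin q → ℝ // u ≠ 0} => e2norm (X *ᵥ u.1) / e2norm u.1) := by
  refine ⟨‖X‖, ?_⟩
  rintro _ ⟨u, rfl⟩
  refine div_le_of_le_mul₀ (e2norm_nonneg _) (norm_nonneg X) ?_
  simp only [e2norm_eq_norm]
  exact l2_opNorm_mulVec X (WithLp.toLp 2 u.1)

lemma e2norm_mulVec_le_specNorm_mul (u : Fin q → ℝ) :
    e2norm (X *ᵥ u) ≤ specNorm X * e2norm u := by
  rcases eq_or_ne u 0 with rfl | hu
  · simp [e2norm]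
  have hpos : 0 < e2norm u := by simpa [e2norm_eq_norm] using hu
  exact (div_le_iff₀ hpos).1 (le_ciSup (bddAbove_range_e2norm_mulVec_div X) ⟨u, hu⟩)

end SpectralNorm

section Coherence

variable {m L d : ℕ} (A : Matrix (Fin m) (Fin L × Fin d) ℝ)

lemma blockCoh_nonneg : 0 ≤ blockCoh A :=
  Real.iSup_nonneg fun _ => mul_nonneg (by positivity) (specNorm_nonneg _)

lemma subCoh_nonneg : 0 ≤ subCoh A :=
  Real.iSup_nonneg fun _ => abs_nonneg _

lemma specNorm_bgram_le (hd : 0 < d) {i j : Fin L} (hij : i ≠ j) :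
    specNorm (bgram A i j) ≤ d * blockCoh A := by
  have hle : 1 / (d : ℝ) * specNorm (bgram A i j) ≤ blockCoh A :=
    le_ciSup (f := fun p : {p : Fin L × Fin L // p.1 ≠ p.2} =>
      1 / (d : ℝ) * specNorm (bgram A p.1.1 p.1.2)) (Set.finite_range _).bddAbove ⟨(i, j), hij⟩
  rwa [one_div, inv_mul_le_iff₀ (Nat.cast_pos.2 hd)] at hle

lemma abs_bgram_self_le_subCoh (l : Fin L) {a b : Fin d} (hab : a ≠ b) :
    |bgram A l l a b| ≤ subCoh A :=
  le_ciSup (f := fun t : {t : Fin L × Fin d × Fin d // t.2.1 ≠ t.2.2} =>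
    |dotp (acol A t.1.1 t.1.2.1) (acol A t.1.1 t.1.2.2)|)
    (Set.finite_range _).bddAbove ⟨(l, a, b), hab⟩

lemma e2norm_bgram_mulVec_le (hd : 0 < d) {i j : Fin L} (hij : i ≠ j) (u : Fin d → ℝ) :
    e2norm (bgram A i j *ᵥ u) ≤ d * blockCoh A * e2norm u :=
  (e2norm_mulVec_le_specNorm_mul _ u).trans
    (mul_le_mul_of_nonneg_right (specNorm_bgram_le A hd hij) (e2norm_nonneg u))

variable {A} in
lemma le_e2norm_bgram_self_mulVec {l : Fin L} (hA : ∀ j, e2norm (acol A l j) = 1)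
    (u : Fin d → ℝ) :
    (1 - ((d : ℝ) - 1) * subCoh A) * e2norm u ≤ e2norm (bgram A l l *ᵥ u) := by
  have hdiag (a : Fin d) : bgram A l l a a = 1 := by rw [bgram, dotp_self, hA, one_pow]
  simpa only [Fintype.card_fin] using one_sub_mul_e2norm_le_e2norm_mulVec (subCoh_nonneg A) hdiag
    (fun _ _ => abs_bgram_self_le_subCoh A l) u

/-- The block `A_l` as an `m × d` matrix. -/
def colBlock (l : Fin L) : Matrix (Fin m) (Fin d) ℝ := A.submatrix id (Prod.mk l)

lemma blkT_eq_transpose_colBlock_mulVec (l : Fin L) (v : Fin m → ℝ) :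
    blkT A l v = (colBlock A l)ᵀ *ᵥ v := rfl

lemma bgram_eq_transpose_colBlock_mul (i j : Fin L) :
    bgram A i j = (colBlock A i)ᵀ * colBlock A j := rfl

lemma blkT_sum_colBlock_mulVec (l : Fin L) (S : Finset (Fin L)) (c : Fin L → Fin d → ℝ) :
    blkT A l (∑ j ∈ S, colBlock A j *ᵥ c j) = ∑ j ∈ S, bgram A l j *ᵥ c j := by
  simp only [blkT_eq_transpose_colBlock_mulVec, bgram_eq_transpose_colBlock_mul, mulVec_sum,
    mulVec_mulVec]

/-- The quantity `1 - (d-1)ν - (2s-1)dμ_B`, whose positivity is the coherence condition for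
recovering block-sparse vectors with `s` active blocks. -/
def coherenceMargin (s : ℕ) : ℝ :=
  1 - ((d : ℝ) - 1) * subCoh A - (2 * (s : ℝ) - 1) * d * blockCoh A

lemma coherenceMargin_antitone : Antitone (coherenceMargin A) := by
  intro s t hst
  have hμ := blockCoh_nonneg A
  unfold coherenceMargin
  gcongr

variable {A} in
lemma exists_mem_forall_notMem_e2norm_blkT_le (hd : 0 < d)
    (hA : ∀ l j, e2norm (acol A l j) = 1) {S : Finset (Fin L)} (hS : S.Nonempty)
    (hmargin : 0 ≤ coherenceMargin A #S) (c : Fin L → Fin d → ℝ) :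
    ∃ i ∈ S, ∀ l ∉ S, e2norm (blkT A l (∑ j ∈ S, colBlock A j *ᵥ c j)) ≤
      e2norm (blkT A i (∑ j ∈ S, colBlock A j *ᵥ c j)) := by
  have hβ : 0 ≤ d * blockCoh A := mul_nonneg d.cast_nonneg (blockCoh_nonneg A)
  have hαβ : (2 * (#S : ℝ) - 1) * (d * blockCoh A) ≤ 1 - ((d : ℝ) - 1) * subCoh A := by
    unfold coherenceMargin at hmargin
    linarith
  have key := exists_mem_forall_notMem_norm_sum_le
    (G := fun i j (y : EuclideanSpace ℝ (Fin d)) => WithLp.toLp 2 (bgram A i j *ᵥ y.ofLp)) hβ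
    (fun i y => by simpa only [e2norm_eq_norm] using le_e2norm_bgram_self_mulVec (hA i) y.ofLp)
    (fun i j hij y => by simpa only [e2norm_eq_norm] using e2norm_bgram_mulVec_le A hd hij y.ofLp)
    hS hαβ (fun j => WithLp.toLp 2 (c j))
  simpa only [blkT_sum_colBlock_mulVec, e2norm_eq_norm, WithLp.toLp_sum] using key

end Coherence

theorem stmt10_general {m L d : ℕ} (hd : 0 < d) (A : Matrix (Fin m) (Fin L × Fin d) ℝ)
    (hA : ∀ l j, e2norm (acol A l j) = 1) {S : Finset (Fin L)} (hS : S.Nonempty)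
    (hmargin : 0 ≤ coherenceMargin A #S) (w : Fin m → ℝ)
    (hw : ∃ c : Fin L → Fin d → ℝ, ∀ i, w i = ∑ l ∈ S, ∑ j, A i (l, j) * c l j)
    {l : Fin L} (hl : l ∉ S) :
    e2norm (blkT A l w) ≤ ⨆ i : {i : Fin L // i ∈ S}, e2norm (blkT A i.1 w) := by
  obtain ⟨c, hc⟩ := hw
  obtain rfl : w = ∑ l ∈ S, colBlock A l *ᵥ c l :=
    funext fun i => (hc i).trans (sum_apply i S fun l => colBlock A l *ᵥ c l).symm
  obtain ⟨i, hi, hmax⟩ := exists_mem_forall_notMem_e2norm_blkT_le hd hA hS hmargin c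
  exact le_ciSup_of_le (Set.finite_range _).bddAbove ⟨i, hi⟩ (hmax l hl)

/-- **Eq. (32) of the paper (Appendix B).**  Assume `1 - (d-1)ν - (2K-1)dμ_B > 0`.  For
`S ⊆ I1` with `|S| = k` (`1 ≤ k < K`), `v = Σ_{l ∈ I1∖S} A_l x̃_l` and `P_S v` the orthogonal
projection of `v` onto the span of the blocks `A_l, l ∈ S`,
`max_{l ∈ S} ‖A_lᵀ P_S v‖₂ ≥ max_{l ∈ I1∖S} ‖A_lᵀ P_S v‖₂`. -/
theorem stmt10 {m L d K k : ℕ}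
    (hm : m < L * d) (hd : 0 < d)
    (A : Matrix (Fin m) (Fin L × Fin d) ℝ)
    (hA : ∀ l j, e2norm (acol A l j) = 1)
    (μB ν : ℝ) (hμB : μB = blockCoh A) (hν : ν = subCoh A)
    (hcond : 0 < 1 - ((d : ℝ) - 1) * ν - (2 * (K : ℝ) - 1) * d * μB)
    (I1 : Finset (Fin L)) (hcard : I1.card = K) (hKL : K < L)
    (S : Finset (Fin L)) (hS : S ⊆ I1) (hSk : S.card = k) (hk1 : 1 ≤ k) (hk : k < K)
    (xt : Fin L → Fin d → ℝ)
    (v : Fin m → ℝ) (hv : v = fun i => ∑ l ∈ I1 \ S, ∑ j, A i (l, j) * xt l j)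
    (PSv : Fin m → ℝ)
    (hPSv1 : ∃ c : Fin L → Fin d → ℝ, ∀ i, PSv i = ∑ l ∈ S, ∑ j, A i (l, j) * c l j)
    (hPSv2 : ∀ l ∈ S, ∀ j, dotp (acol A l j) (fun i => v i - PSv i) = 0) :
    (⨆ l : {l : Fin L // l ∈ I1 \ S}, e2norm (blkT A l.1 PSv)) ≤
      ⨆ l : {l : Fin L // l ∈ S}, e2norm (blkT A l.1 PSv) := by
  subst hμB hν hSk
  exact Real.iSup_le (fun l => stmt10_general hd A hA (card_pos.1 hk1)
    (hcond.le.trans (coherenceMargin_antitone A hk.le)) PSv hPSv1 (mem_sdiff.1 l.2).2)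
    (Real.iSup_nonneg fun _ => e2norm_nonneg _)
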